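/- arXiv:2506.11228 — 6 statements merged into one kernel-verified Lean document; each statement's English description precedes it below -/
import Mathlib

section
/- Let n ≥ 1 and let A be an n × n matrix with natural number entries that is irreducible, meaning that for every pair of indices (i, j) there exists m ≥ 1 such that the (i, j) entry of A^m is positive. Suppose moreover that A is not a permutation matrix, i.e. there is no permutation σ of the indices such that A i j = 1 when j = σ(i) and A i j = 0 otherwise. Define a directed relation R on indices by: R i j holds if and only if A i j = 1 and A k j = 0 for all k ≠ i. Then R admits no directed cycle: there is no sequence of indices i₀, i₁, …, i_m with m ≥ 1, i_m = i₀, and R i_t i_{t+1} for all 0 ≤ t < m. -/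
/-- The combinatorial content of the paper's Lemma on the auxiliary graph `G(f)`:
for an irreducible non-permutation matrix `A` with natural number entries,
the relation `R i j ↔ (A i j = 1 ∧ ∀ k ≠ i, A k j = 0)` admits no directed cycle. -/
theorem stmt0 (n : ℕ) (hn : 1 ≤ n) (A : Matrix (Fin n) (Fin n) ℕ)
    (hirr : ∀ i j : Fin n, ∃ m : ℕ, 1 ≤ m ∧ 0 < (A ^ m) i j)
    (hperm : ¬ ∃ σ : Equiv.Perm (Fin n), ∀ i j : Fin n,
      A i j = if j = σ i then 1 else 0) :
    ¬ ∃ (m : ℕ) (seq : ℕ → Fin n), 1 ≤ m ∧ seq m = seq 0 ∧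
      ∀ t < m, A (seq t) (seq (t + 1)) = 1 ∧
        ∀ k : Fin n, k ≠ seq t → A k (seq (t + 1)) = 0 := by
  rintro ⟨m, seq, hm, h0, hR⟩
  have hC : ∀ t < m, ∃ s < m, seq t = seq (s + 1) := by
    intro t ht
    rcases t with _ | t
    · refine ⟨m - 1, by omega, ?_⟩
      rw [← h0]
      congr 1
      omega
    · exact ⟨t, by omega, rfl⟩
  have hpow : ∀ k : ℕ, ∀ i : Fin n, 0 < (A ^ k) i (seq 0) → ∃ t < m, i = seq t := by
    intro k
    induction k with
    | zero =>
      intro i hi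
      refine ⟨0, by omega, ?_⟩
      by_contra hne
      rw [pow_zero, Matrix.one_apply_ne hne] at hi
      exact lt_irrefl _ hi
    | succ k ih =>
      intro i hi
      rw [pow_succ', Matrix.mul_apply] at hi
      obtain ⟨l, -, hl⟩ := Finset.exists_ne_zero_of_sum_ne_zero hi.ne'
      obtain ⟨t, ht, rfl⟩ := ih l (Nat.pos_of_ne_zero (right_ne_zero_of_mul hl))
      obtain ⟨s, hs, e⟩ := hC t ht
      refine ⟨s, hs, ?_⟩
      by_contra hne
      apply left_ne_zero_of_mul hl
      rw [e]
      exact (hR s hs).2 i hne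
  have hall : ∀ i : Fin n, ∃ t < m, i = seq t := by
    intro i
    obtain ⟨k, -, hk⟩ := hirr i (seq 0)
    exact hpow k i hk
  have hp : ∀ j : Fin n, ∃ i, A i j = 1 ∧ ∀ k, k ≠ i → A k j = 0 := by
    intro j
    obtain ⟨t, ht, rfl⟩ := hall j
    obtain ⟨s, hs, e⟩ := hC t ht
    rw [e]
    exact ⟨seq s, hR s hs⟩
  choose p hp1 hp2 using hp
  have hsurj : Function.Surjective p := by
    intro i
    obtain ⟨t, ht, rfl⟩ := hall i
    refine ⟨seq (t + 1), ?_⟩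
    by_contra hne
    have h1 := (hR t ht).1
    rw [hp2 _ _ (Ne.symm hne)] at h1
    exact zero_ne_one h1
  let e := Equiv.ofBijective p (Finite.surjective_iff_bijective.mp hsurj)
  refine hperm ⟨e.symm, fun i j => ?_⟩
  have he : e j = p j := rfl
  split_ifs with h
  · rw [Equiv.eq_symm_apply, he] at h
    rw [← h]
    exact hp1 j
  · rw [Equiv.eq_symm_apply, he] at h
    exact hp2 j i (Ne.symm h)
end

section
/- Let F₃ be the free group on generators a, b, c, let Φ be the automorphism of F₃ determined by a ↦ c·a, b ↦ a·b, c ↦ b⁻¹·a·b, and let G = F₃ ⋊_Φ ℤ be the semidirect product in which the generator 1 ∈ ℤ acts on F₃ by Φ (so n ∈ ℤ acts by Φⁿ). Then the abelianization of G is free abelian of rank 2; explicitly, it is isomorphic to ℤ × ℤ, with the images of b ∈ F₃ and of the stable generator r = (1, 1 ∈ ℤ) forming a basis. -/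
/-- Let `Φ` be the automorphism of `F₃ = FreeGroup (Fin 3)` given by `a ↦ c·a`,
`b ↦ a·b`, `c ↦ b⁻¹·a·b` and `G = F₃ ⋊_Φ ℤ` the mapping torus group (where
`1 ∈ ℤ` acts by `Φ`).  Then the abelianization of `G` is free abelian of rank 2:
it is isomorphic to `ℤ × ℤ` with the images of `b` and of the stable generator
`r` forming a basis. -/
theorem stmt3 (Φ : FreeGroup (Fin 3) ≃* FreeGroup (Fin 3))
    (ha : Φ (FreeGroup.of 0) = FreeGroup.of 2 * FreeGroup.of 0)
    (hb : Φ (FreeGroup.of 1) = FreeGroup.of 0 * FreeGroup.of 1)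
    (hc : Φ (FreeGroup.of 2) = (FreeGroup.of 1)⁻¹ * FreeGroup.of 0 * FreeGroup.of 1) :
    ∃ e : Abelianization
        (FreeGroup (Fin 3)
          ⋊[zpowersHom (MulAut (FreeGroup (Fin 3))) (Φ : MulAut (FreeGroup (Fin 3)))]
          Multiplicative ℤ) ≃* Multiplicative (ℤ × ℤ),
      e (Abelianization.of (SemidirectProduct.inl (FreeGroup.of 1))) =
        Multiplicative.ofAdd (1, 0) ∧
      e (Abelianization.of (SemidirectProduct.inr (Multiplicative.ofAdd 1))) =
        Multiplicative.ofAdd (0, 1) := by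
  have hM : ∀ m n : ℤ, (Multiplicative.ofAdd ((1, 0) : ℤ × ℤ)) ^ m *
      (Multiplicative.ofAdd ((0, 1) : ℤ × ℤ)) ^ n = Multiplicative.ofAdd (m, n) := by
    intro m n
    rw [← ofAdd_zsmul, ← ofAdd_zsmul, ← ofAdd_add]
    simp
  let M := Multiplicative (ℤ × ℤ)
  let f : FreeGroup (Fin 3) →* M :=
    FreeGroup.lift ![1, Multiplicative.ofAdd (1, 0), 1]
  let φ := zpowersHom (MulAut (FreeGroup (Fin 3))) (Φ : MulAut (FreeGroup (Fin 3)))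
  let g : Multiplicative ℤ →* M := zpowersHom M (Multiplicative.ofAdd (0, 1))
  have f0 : f (FreeGroup.of 0) = 1 := by simp [f]
  have f1 : f (FreeGroup.of 1) = Multiplicative.ofAdd (1, 0) := by simp [f]
  have f2 : f (FreeGroup.of 2) = 1 := by simp [f]
  have g1 : g (Multiplicative.ofAdd 1) = Multiplicative.ofAdd (0, 1) := by
    simp [g, zpowersHom_apply]
  have hf : f.comp Φ.toMonoidHom = f := by
    ext i : 1
    fin_cases i
    · simp [ha, f0, f2]
    · simp [hb, f0, f1]
    · simp [hc, f0, f1, f2]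
      exact inv_mul_cancel (Multiplicative.ofAdd ((1 : ℤ), (0 : ℤ)))
  have hf' : ∀ x, f (Φ x) = f x := fun x => DFunLike.congr_fun hf x
  have hz : ∀ (n : ℤ) (x), f (((Φ : MulAut (FreeGroup (Fin 3))) ^ n) x) = f x := by
    intro n
    induction n using Int.induction_on with
    | zero => intro x; simp
    | succ k ih => intro x; rw [zpow_add_one, MulAut.mul_apply, ih]; exact hf' x
    | pred k ih =>
      intro x
      rw [zpow_sub_one, MulAut.mul_apply, ih, ← hf']
      exact congrArg f (Φ.apply_symm_apply x)
  let F : FreeGroup (Fin 3) ⋊[φ] Multiplicative ℤ →* M :=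
    SemidirectProduct.lift f g (by
      intro n
      apply FreeGroup.ext_hom
      intro i
      have := hz n.toAdd (FreeGroup.of i)
      simpa [φ, zpowersHom_apply, mul_comm] using this)
  let A := Abelianization (FreeGroup (Fin 3) ⋊[φ] Multiplicative ℤ)
  let ι : FreeGroup (Fin 3) →* A := Abelianization.of.comp SemidirectProduct.inl
  let R : A := Abelianization.of (SemidirectProduct.inr (Multiplicative.ofAdd 1))
  have hι : ∀ x, ι (Φ x) = ι x := by
    intro x
    have h := SemidirectProduct.inl_aut (φ := φ) (Multiplicative.ofAdd 1) x
    have h2 : φ (Multiplicative.ofAdd 1) x = Φ x := by simp [φ, zpowersHom_apply]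
    rw [h2] at h
    have h3 := congrArg (Abelianization.of) h
    simp only [map_mul, map_inv] at h3
    rw [mul_comm, ← mul_assoc, inv_mul_cancel, one_mul] at h3
    exact h3
  have c0 : ι (FreeGroup.of 2) = 1 := by
    have := hι (FreeGroup.of 0)
    rw [ha, map_mul] at this
    simpa using this
  have a0 : ι (FreeGroup.of 0) = 1 := by
    have := hι (FreeGroup.of 1)
    rw [hb, map_mul] at this
    simpa using this
  let B : A := ι (FreeGroup.of 1)
  let K : M →* A :=
    { toFun := fun p => B ^ (p.toAdd.1) * R ^ (p.toAdd.2)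
      map_one' := by simp
      map_mul' := by
        intro p q
        change B ^ ((Multiplicative.toAdd p).1 + (Multiplicative.toAdd q).1) *
          R ^ ((Multiplicative.toAdd p).2 + (Multiplicative.toAdd q).2) = _
        rw [zpow_add, zpow_add]
        exact mul_mul_mul_comm _ _ _ _ }
  have FB : Abelianization.lift F B = Multiplicative.ofAdd (1, 0) := by
    simp [B, ι, F, f1]
  have FR : Abelianization.lift F R = Multiplicative.ofAdd (0, 1) := by
    simp [R, F, g1]
  refine ⟨MonoidHom.toMulEquiv (Abelianization.lift F) K ?_ ?_, FB, FR⟩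
  · apply Abelianization.hom_ext
    apply SemidirectProduct.hom_ext
    · ext i : 1
      have key : ∀ x, K (Abelianization.lift F (ι x)) = K (f x) := by
        intro x; simp [ι, F]
      have : K (Abelianization.lift F (ι (FreeGroup.of i))) = ι (FreeGroup.of i) := by
        rw [key]
        fin_cases i
        · simp [f0, a0]
        · simp [f1, K, B]
        · simp [f2, c0]
      exact this
    · ext
      have : K (Abelianization.lift F R) = R := by
        rw [FR]; simp [K]
      exact this
  · refine MonoidHom.ext fun p => ?_
    have : Abelianization.lift F (B ^ (p.toAdd.1) * R ^ (p.toAdd.2)) = p := by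
      rw [map_mul, map_zpow, map_zpow, FB, FR]
      exact hM p.toAdd.1 p.toAdd.2
    exact this
end

section
/- Let α be a type and let φ be an automorphism of the free group F(α) on α. Let G = F(α) ⋊_φ ℤ be the semidirect product in which n ∈ ℤ acts on F(α) by φⁿ. Then G is isomorphic to the presented group with generating set α ⊕ {r} and relator set { r⁻¹·x_a·r·(j(φ(x_a)))⁻¹ : a ∈ α }, where x_a denotes the generator of the free group on α ⊕ {r} corresponding to a ∈ α, r denotes the generator corresponding to the extra element, and j : F(α) → F(α ⊕ {r}) is the homomorphism induced by the inclusion of generating sets. -/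
theorem conj_zpow_aux {N H : Type*} [Group N] [Group H] (f : N →* H) (t : H) (ψ : MulAut N)
    (h : ∀ n, f (ψ n) = t * f n * t⁻¹) (k : ℤ) : ∀ n, f ((ψ ^ k) n) = t ^ k * f n * (t ^ k)⁻¹ := by
  have h' : ∀ n, f (ψ⁻¹ n) = t⁻¹ * f n * t := by
    intro n
    have := h (ψ⁻¹ n)
    rw [MulAut.apply_inv_self] at this
    rw [this]; group
  induction k using Int.induction_on with
  | zero => intro n; simp
  | succ i ih => intro n; rw [zpow_add_one, MulAut.mul_apply, ih, h, zpow_add_one]; group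
  | pred i ih => intro n; rw [zpow_sub_one, MulAut.mul_apply, ih, h', zpow_sub_one]; group

/-- For any automorphism `φ` of a free group `F(α)`, the mapping torus group
`F(α) ⋊_φ ℤ` (with `1 ∈ ℤ` acting by `φ`) is isomorphic to the presented group
on generators `α ⊕ {r}` with relators `r⁻¹ x_a r (j(φ(x_a)))⁻¹` for `a ∈ α`,
where `j : F(α) → F(α ⊕ {r})` is induced by the inclusion of generators. -/
theorem stmt4 (α : Type*) (φ : FreeGroup α ≃* FreeGroup α) :
    Nonempty
      ((FreeGroup α
          ⋊[zpowersHom (MulAut (FreeGroup α)) (φ : MulAut (FreeGroup α))]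
          Multiplicative ℤ) ≃*
        PresentedGroup (Set.range (fun a : α =>
          (FreeGroup.of (Sum.inr () : α ⊕ Unit))⁻¹ * FreeGroup.of (Sum.inl a : α ⊕ Unit) *
            FreeGroup.of (Sum.inr () : α ⊕ Unit) *
            (FreeGroup.map (Sum.inl : α → α ⊕ Unit) (φ (FreeGroup.of a)))⁻¹))) := by
  set rels := (Set.range (fun a : α =>
          (FreeGroup.of (Sum.inr () : α ⊕ Unit))⁻¹ * FreeGroup.of (Sum.inl a : α ⊕ Unit) *
            FreeGroup.of (Sum.inr () : α ⊕ Unit) *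
            (FreeGroup.map (Sum.inl : α → α ⊕ Unit) (φ (FreeGroup.of a)))⁻¹)) with hrels
  let act := zpowersHom (MulAut (FreeGroup α)) (φ : MulAut (FreeGroup α))
  let fn : FreeGroup α →* PresentedGroup rels :=
    (PresentedGroup.mk rels).comp (FreeGroup.map Sum.inl)
  let t : PresentedGroup rels := (PresentedGroup.of (Sum.inr ()))⁻¹
  have hgen : ∀ n, fn (φ n) = t * fn n * t⁻¹ := by
    have : fn.comp φ.toMonoidHom = (MulAut.conj t).toMonoidHom.comp fn := by
      ext a
      have hm : PresentedGroup.mk rels ((FreeGroup.of (Sum.inr () : α ⊕ Unit))⁻¹ *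
          FreeGroup.of (Sum.inl a : α ⊕ Unit) * FreeGroup.of (Sum.inr () : α ⊕ Unit) *
            (FreeGroup.map (Sum.inl : α → α ⊕ Unit) (φ (FreeGroup.of a)))⁻¹) = 1 :=
        PresentedGroup.one_of_mem ⟨a, rfl⟩
      rw [map_mul, map_inv, mul_inv_eq_one] at hm
      change PresentedGroup.mk rels (FreeGroup.map Sum.inl (φ (FreeGroup.of a))) =
        t * PresentedGroup.mk rels (FreeGroup.map Sum.inl (FreeGroup.of a)) * t⁻¹
      rw [← hm]
      simp [t, PresentedGroup.of]
    intro n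
    exact DFunLike.congr_fun this n
  let F : (FreeGroup α ⋊[act] Multiplicative ℤ) →* PresentedGroup rels :=
    SemidirectProduct.lift fn (zpowersHom _ t) (by
      intro g
      refine MonoidHom.ext fun n => ?_
      exact conj_zpow_aux fn t φ hgen g.toAdd n)
  let r : FreeGroup α ⋊[act] Multiplicative ℤ := SemidirectProduct.inr (Multiplicative.ofAdd 1)
  let gf : α ⊕ Unit → FreeGroup α ⋊[act] Multiplicative ℤ :=
    Sum.elim (fun a => SemidirectProduct.inl (FreeGroup.of a)) (fun _ => r⁻¹)
  have hgf : (FreeGroup.lift gf).comp (FreeGroup.map Sum.inl) = SemidirectProduct.inl := by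
    ext a <;> simp [gf]
  have hrel : ∀ x ∈ rels, FreeGroup.lift gf x = 1 := by
    rintro _ ⟨a, rfl⟩
    have h1 := DFunLike.congr_fun hgf (φ (FreeGroup.of a))
    rw [MonoidHom.comp_apply] at h1
    have h2 := SemidirectProduct.inl_aut (φ := act) (Multiplicative.ofAdd 1) (FreeGroup.of a)
    have h3 : act (Multiplicative.ofAdd 1) = φ := by simp [act]
    rw [h3] at h2
    simp only [map_mul, map_inv, FreeGroup.lift_apply_of]
    rw [h1, h2]
    simp [gf, r]
  let K : PresentedGroup rels →* (FreeGroup α ⋊[act] Multiplicative ℤ) :=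
    PresentedGroup.toGroup hrel
  have hK : ∀ x, K (PresentedGroup.of x) = gf x := fun x => PresentedGroup.toGroup.of hrel
  have hKF : K.comp F = MonoidHom.id _ := by
    apply SemidirectProduct.hom_ext
    · refine FreeGroup.ext_hom _ _ fun a => ?_
      change K (F (SemidirectProduct.inl (FreeGroup.of a))) = SemidirectProduct.inl (FreeGroup.of a)
      rw [SemidirectProduct.lift_inl]
      exact hK (Sum.inl a)
    · refine MonoidHom.ext_mint ?_
      change K (F (SemidirectProduct.inr (Multiplicative.ofAdd 1))) = r
      rw [SemidirectProduct.lift_inr]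
      simp [t, hK, gf]
  have hFK : F.comp K = MonoidHom.id _ := by
    apply PresentedGroup.ext
    rintro (a | ⟨⟩)
    · rw [MonoidHom.comp_apply, hK]
      change F (SemidirectProduct.inl (FreeGroup.of a)) = _
      rw [SemidirectProduct.lift_inl]
      rfl
    · rw [MonoidHom.comp_apply, hK]
      change F (r⁻¹) = _
      rw [map_inv, SemidirectProduct.lift_inr]
      simp [t]
  exact ⟨MonoidHom.toMulEquiv F K hKF hFK⟩
end

section
/- The presented group G₀ = ⟨a, b, c, r | r⁻¹ar(ca)⁻¹, r⁻¹br(ab)⁻¹, r⁻¹cr(b⁻¹ab)⁻¹⟩ is isomorphic to the one-relator presented group ⟨b, r | r³b⁻¹r⁻¹br⁻¹brb⁻¹r⁻¹br⁻¹b⁻¹⟩. -/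
lemma aux_third {G : Type*} [Group G] (b r : G)
    (h : r ^ 3 * b⁻¹ * r⁻¹ * b * r⁻¹ * b * r * b⁻¹ * r⁻¹ * b * r⁻¹ * b⁻¹ = 1) :
    r⁻¹ * (r⁻¹ * (r⁻¹ * b * r * b⁻¹) * r * (r⁻¹ * b * r * b⁻¹)⁻¹) * r *
      (b⁻¹ * (r⁻¹ * b * r * b⁻¹) * b)⁻¹ = 1 := by
  have : r⁻¹ * (r⁻¹ * (r⁻¹ * b * r * b⁻¹) * r * (r⁻¹ * b * r * b⁻¹)⁻¹) * r *
      (b⁻¹ * (r⁻¹ * b * r * b⁻¹) * b)⁻¹ =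
      ((r ^ 3)⁻¹ * (r ^ 3 * b⁻¹ * r⁻¹ * b * r⁻¹ * b * r * b⁻¹ * r⁻¹ * b * r⁻¹ * b⁻¹)
        * r ^ 3)⁻¹ := by group
  rw [this, h]; group

lemma aux_back {G : Type*} [Group G] (a b c r : G)
    (h1 : r⁻¹ * a * r * (c * a)⁻¹ = 1) (h2 : r⁻¹ * b * r * (a * b)⁻¹ = 1)
    (h3 : r⁻¹ * c * r * (b⁻¹ * a * b)⁻¹ = 1) :
    a = r⁻¹ * b * r * b⁻¹ ∧
    c = r⁻¹ * (r⁻¹ * b * r * b⁻¹) * r * (r⁻¹ * b * r * b⁻¹)⁻¹ ∧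
    r ^ 3 * b⁻¹ * r⁻¹ * b * r⁻¹ * b * r * b⁻¹ * r⁻¹ * b * r⁻¹ * b⁻¹ = 1 := by
  have ha : a = r⁻¹ * b * r * b⁻¹ := by
    rw [mul_inv_eq_one] at h2; rw [h2]; group
  have hc : c = r⁻¹ * a * r * a⁻¹ := by
    rw [mul_inv_eq_one] at h1; rw [h1]; group
  subst ha
  refine ⟨rfl, hc, ?_⟩
  subst hc
  have : r ^ 3 * b⁻¹ * r⁻¹ * b * r⁻¹ * b * r * b⁻¹ * r⁻¹ * b * r⁻¹ * b⁻¹ =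
      r ^ 3 * (r⁻¹ * (r⁻¹ * (r⁻¹ * b * r * b⁻¹) * r * (r⁻¹ * b * r * b⁻¹)⁻¹) * r *
      (b⁻¹ * (r⁻¹ * b * r * b⁻¹) * b)⁻¹)⁻¹ * (r ^ 3)⁻¹ := by group
  rw [this, h3]; group

/-- The presented group
`⟨a, b, c, r | r⁻¹ar(ca)⁻¹, r⁻¹br(ab)⁻¹, r⁻¹cr(b⁻¹ab)⁻¹⟩`
(generators `a = of 0`, `b = of 1`, `c = of 2`, `r = of 3`) is isomorphic to the
one-relator group `⟨b, r | r³b⁻¹r⁻¹br⁻¹brb⁻¹r⁻¹br⁻¹b⁻¹⟩`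
(generators `b = of 0`, `r = of 1`). -/
theorem stmt5 :
    Nonempty
      (PresentedGroup
        ({(FreeGroup.of 3)⁻¹ * FreeGroup.of 0 * FreeGroup.of 3 *
            (FreeGroup.of 2 * FreeGroup.of 0)⁻¹,
          (FreeGroup.of 3)⁻¹ * FreeGroup.of 1 * FreeGroup.of 3 *
            (FreeGroup.of 0 * FreeGroup.of 1)⁻¹,
          (FreeGroup.of 3)⁻¹ * FreeGroup.of 2 * FreeGroup.of 3 *
            ((FreeGroup.of 1)⁻¹ * FreeGroup.of 0 * FreeGroup.of 1)⁻¹} :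
          Set (FreeGroup (Fin 4))) ≃*
       PresentedGroup
        ({(FreeGroup.of 1) ^ 3 * (FreeGroup.of 0)⁻¹ * (FreeGroup.of 1)⁻¹ *
            FreeGroup.of 0 * (FreeGroup.of 1)⁻¹ * FreeGroup.of 0 * FreeGroup.of 1 *
            (FreeGroup.of 0)⁻¹ * (FreeGroup.of 1)⁻¹ * FreeGroup.of 0 *
            (FreeGroup.of 1)⁻¹ * (FreeGroup.of 0)⁻¹} :
          Set (FreeGroup (Fin 2)))) := by
  set R4 : Set (FreeGroup (Fin 4)) := {(FreeGroup.of 3)⁻¹ * FreeGroup.of 0 * FreeGroup.of 3 *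
            (FreeGroup.of 2 * FreeGroup.of 0)⁻¹,
          (FreeGroup.of 3)⁻¹ * FreeGroup.of 1 * FreeGroup.of 3 *
            (FreeGroup.of 0 * FreeGroup.of 1)⁻¹,
          (FreeGroup.of 3)⁻¹ * FreeGroup.of 2 * FreeGroup.of 3 *
            ((FreeGroup.of 1)⁻¹ * FreeGroup.of 0 * FreeGroup.of 1)⁻¹} with hR4
  set R2 : Set (FreeGroup (Fin 2)) := {(FreeGroup.of 1) ^ 3 * (FreeGroup.of 0)⁻¹ *
            (FreeGroup.of 1)⁻¹ *
            FreeGroup.of 0 * (FreeGroup.of 1)⁻¹ * FreeGroup.of 0 * FreeGroup.of 1 *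
            (FreeGroup.of 0)⁻¹ * (FreeGroup.of 1)⁻¹ * FreeGroup.of 0 *
            (FreeGroup.of 1)⁻¹ * (FreeGroup.of 0)⁻¹} with hR2
  have e1 := PresentedGroup.one_of_mem (rels := R4) (x := _) (Set.mem_insert _ _)
  have e2 := PresentedGroup.one_of_mem (rels := R4) (x := _)
    (Set.mem_insert_of_mem _ (Set.mem_insert _ _))
  have e3 := PresentedGroup.one_of_mem (rels := R4) (x := _)
    (Set.mem_insert_of_mem _ (Set.mem_insert_of_mem _ (Set.mem_singleton _)))
  have e4 := PresentedGroup.one_of_mem (rels := R2) (x := _) (Set.mem_singleton _)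
  simp only [map_mul, map_inv, map_pow] at e1 e2 e3 e4
  obtain ⟨ka, kc, kr⟩ := aux_back _ _ _ _ e1 e2 e3
  let b : PresentedGroup R2 := PresentedGroup.of 0
  let r : PresentedGroup R2 := PresentedGroup.of 1
  have h4 := aux_third b r e4
  let f : Fin 4 → PresentedGroup R2 := ![r⁻¹ * b * r * b⁻¹, b,
    r⁻¹ * (r⁻¹ * b * r * b⁻¹) * r * (r⁻¹ * b * r * b⁻¹)⁻¹, r]
  let g : Fin 2 → PresentedGroup R4 := ![PresentedGroup.of 1, PresentedGroup.of 3]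
  have f0 : f 0 = r⁻¹ * b * r * b⁻¹ := rfl
  have f1 : f 1 = b := rfl
  have f2 : f 2 = r⁻¹ * (r⁻¹ * b * r * b⁻¹) * r * (r⁻¹ * b * r * b⁻¹)⁻¹ := rfl
  have f3 : f 3 = r := rfl
  have g0 : g 0 = PresentedGroup.of 1 := rfl
  have g1 : g 1 = PresentedGroup.of 3 := rfl
  have hf : ∀ x ∈ R4, FreeGroup.lift f x = 1 := by
    intro x hx
    rw [hR4] at hx
    rcases hx with rfl | rfl | rfl
    · simp only [map_mul, map_inv, FreeGroup.lift_apply_of, f0, f2, f3]; group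
    · simp only [map_mul, map_inv, FreeGroup.lift_apply_of, f0, f1, f3]; group
    · simp only [map_mul, map_inv, FreeGroup.lift_apply_of, f0, f1, f2, f3]; exact h4
  have hg : ∀ x ∈ R2, FreeGroup.lift g x = 1 := by
    intro x hx
    rw [hR2] at hx
    rcases hx with rfl
    simp only [map_mul, map_inv, map_pow, FreeGroup.lift_apply_of, g0, g1]; exact kr
  let F := PresentedGroup.toGroup hf
  let K := PresentedGroup.toGroup hg
  have Fo : ∀ i, F (PresentedGroup.of i) = f i := fun i => PresentedGroup.toGroup.of hf
  have Ko : ∀ i, K (PresentedGroup.of i) = g i := fun i => PresentedGroup.toGroup.of hg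
  have Kb : K b = PresentedGroup.of 1 := Ko 0
  have Kr : K r = PresentedGroup.of 3 := Ko 1
  refine ⟨MonoidHom.toMulEquiv F K ?_ ?_⟩
  · apply PresentedGroup.ext
    intro i
    rw [MonoidHom.comp_apply, MonoidHom.id_apply, Fo]
    fin_cases i
    · change K (f 0) = _
      simp only [f0, map_mul, map_inv, Kb, Kr]; exact ka.symm
    · exact Kb
    · change K (f 2) = _
      simp only [f2, map_mul, map_inv, Kb, Kr]; exact kc.symm
    · exact Kr
  · apply PresentedGroup.ext
    intro i
    rw [MonoidHom.comp_apply, MonoidHom.id_apply, Ko]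
    fin_cases i
    · exact Fo 1
    · exact Fo 3
end

section
/- Let k ≥ 1 be a natural number and let F_{k+3} be the free group on the k + 3 generators s₁, s₂, t₁, …, t_{k+1}. The group endomorphism φ_k of F_{k+3} determined on generators by s₁ ↦ t₁, s₂ ↦ s₂·t₁, t_i ↦ t_{i+1} for 1 ≤ i ≤ k, and t_{k+1} ↦ s₂·s₁·t₁·s₂⁻¹ is bijective; that is, φ_k is an automorphism of F_{k+3}. -/
/-- For `k ≥ 1`, the endomorphism `φ_k` of the free group on `k + 3` generators
`s₁ = of (inl 0)`, `s₂ = of (inl 1)`, `t_{j+1} = of (inr j)` for `j : Fin (k+1)`,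
determined by `s₁ ↦ t₁`, `s₂ ↦ s₂·t₁`, `t_i ↦ t_{i+1}` for `1 ≤ i ≤ k`, and
`t_{k+1} ↦ s₂·s₁·t₁·s₂⁻¹`, is an automorphism. -/
theorem stmt6 (k : ℕ) (hk : 1 ≤ k) :
    Function.Bijective
      (FreeGroup.lift (fun x : Fin 2 ⊕ Fin (k + 1) =>
        match x with
        | Sum.inl s =>
            if s = 0 then FreeGroup.of (Sum.inr 0 : Fin 2 ⊕ Fin (k + 1))
            else FreeGroup.of (Sum.inl 1 : Fin 2 ⊕ Fin (k + 1)) *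
              FreeGroup.of (Sum.inr 0 : Fin 2 ⊕ Fin (k + 1))
        | Sum.inr j =>
            if h : (j : ℕ) < k then
              FreeGroup.of (Sum.inr (⟨(j : ℕ) + 1, by omega⟩ : Fin (k + 1)) :
                Fin 2 ⊕ Fin (k + 1))
            else
              FreeGroup.of (Sum.inl 1 : Fin 2 ⊕ Fin (k + 1)) *
                FreeGroup.of (Sum.inl 0 : Fin 2 ⊕ Fin (k + 1)) *
                FreeGroup.of (Sum.inr 0 : Fin 2 ⊕ Fin (k + 1)) *
                (FreeGroup.of (Sum.inl 1 : Fin 2 ⊕ Fin (k + 1)))⁻¹)) := by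
  let a : FreeGroup (Fin 2 ⊕ Fin (k + 1)) := FreeGroup.of (Sum.inl 0)
  let b : FreeGroup (Fin 2 ⊕ Fin (k + 1)) := FreeGroup.of (Sum.inl 1)
  let ψ : FreeGroup (Fin 2 ⊕ Fin (k + 1)) →* FreeGroup (Fin 2 ⊕ Fin (k + 1)) :=
    FreeGroup.lift (fun x : Fin 2 ⊕ Fin (k + 1) =>
      match x with
      | Sum.inl s =>
          if s = 0 then a * b⁻¹ * FreeGroup.of (Sum.inr (Fin.last k)) * b * a⁻¹ * a⁻¹
          else b * a⁻¹
      | Sum.inr j =>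
          if (j : ℕ) = 0 then a
          else FreeGroup.of (Sum.inr (⟨(j : ℕ) - 1, by omega⟩ : Fin (k + 1))))
  rw [Function.bijective_iff_has_inverse]
  refine ⟨ψ, ?_, ?_⟩
  · intro x
    rw [← MonoidHom.comp_apply]
    refine DFunLike.congr_fun (g := MonoidHom.id _) ?_ x
    ext y
    rcases y with s | j
    · fin_cases s <;> simp [ψ, a, b]
    · by_cases h : (j : ℕ) < k
      · simp [ψ, h]
      · have : j = Fin.last k := Fin.ext (by simp; omega)
        subst this
        simp [ψ, a, b, mul_assoc]
  · intro x
    rw [← MonoidHom.comp_apply]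
    refine DFunLike.congr_fun (g := MonoidHom.id _) ?_ x
    ext y
    rcases y with s | j
    · fin_cases s <;> simp [ψ, a, b, mul_assoc]
    · by_cases h : (j : ℕ) = 0
      · have : j = 0 := Fin.ext h
        subst this
        simp [ψ, a]
      · have h1 : (j : ℕ) - 1 < k := by omega
        have h2 : (j : ℕ) - 1 + 1 = j := by omega
        have h3 : j ≠ 0 := fun e => h (by simp [e])
        simp [ψ, h3, h1, h2]
end

section
/- Let φ be the automorphism of the free group F₃ on generators a, b, c determined by a ↦ c·a, b ↦ a·b, c ↦ b⁻¹·a·b, and for each natural number k ≥ 1 let φ_k be the automorphism of the free group F_{k+3} on generators s₁, s₂, t₁, …, t_{k+1} determined by s₁ ↦ t₁, s₂ ↦ s₂·t₁, t_i ↦ t_{i+1} for 1 ≤ i ≤ k, and t_{k+1} ↦ s₂·s₁·t₁·s₂⁻¹. Then for every k ≥ 1 the semidirect product F_{k+3} ⋊_{φ_k} ℤ is isomorphic to F₃ ⋊_φ ℤ. In particular, the free-by-cyclic group G = F₃ ⋊_φ ℤ splits as a free-by-cyclic group with free kernel of rank k + 3 for every k ≥ 1. -/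
section Helper

variable {α : Type*} {H : Type*} [Group H]

lemma mt_pow (ψ : MulAut (FreeGroup α)) (f : FreeGroup α →* H) (w : H)
    (h : ∀ x, f (ψ (FreeGroup.of x)) = w * f (FreeGroup.of x) * w⁻¹) (n : ℤ) (x : FreeGroup α) :
    f ((ψ ^ n) x) = w ^ n * f x * (w ^ n)⁻¹ := by
  have h1 : ∀ y, f (ψ y) = w * f y * w⁻¹ := by
    have : f.comp ψ.toMonoidHom = (MulAut.conj w).toMonoidHom.comp f := by
      ext x
      simpa using h x
    intro y
    simpa using DFunLike.congr_fun this y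
  induction n using Int.induction_on generalizing x with
  | zero => simp
  | succ n ih =>
    rw [zpow_add_one, MulAut.mul_apply, ih, h1, zpow_add_one]
    group
  | pred n ih =>
    have h2 : f (ψ⁻¹ x) = w⁻¹ * f x * w := by
      have := h1 (ψ⁻¹ x)
      rw [MulAut.apply_inv_self] at this
      rw [this]; group
    rw [zpow_sub_one, MulAut.mul_apply, ih, h2, zpow_sub_one]
    group

lemma mt_lift (ψ : MulAut (FreeGroup α)) (f : α → H) (w : H)
    (h : ∀ x, FreeGroup.lift f (ψ (FreeGroup.of x)) = w * f x * w⁻¹) :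
    ∃ F : (FreeGroup α ⋊[zpowersHom (MulAut (FreeGroup α)) ψ] Multiplicative ℤ) →* H,
      (∀ x, F (SemidirectProduct.inl (FreeGroup.of x)) = f x) ∧
      F (SemidirectProduct.inr (Multiplicative.ofAdd 1)) = w := by
  refine ⟨SemidirectProduct.lift (FreeGroup.lift f) (zpowersHom H w) ?_, ?_, ?_⟩
  · intro g
    ext x
    have := mt_pow ψ (FreeGroup.lift f) w (by simpa using h) g.toAdd (FreeGroup.of x)
    simp only [MonoidHom.comp_apply, MulEquiv.coe_toMonoidHom, zpowersHom_apply, MulAut.conj_apply]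
    exact this
  · intro x; simp
  · simp [zpowersHom_apply]

lemma mt_ext (ψ : MulAut (FreeGroup α))
    (F G : (FreeGroup α ⋊[zpowersHom (MulAut (FreeGroup α)) ψ] Multiplicative ℤ) →* H)
    (h : ∀ x, F (SemidirectProduct.inl (FreeGroup.of x)) =
      G (SemidirectProduct.inl (FreeGroup.of x)))
    (h1 : F (SemidirectProduct.inr (Multiplicative.ofAdd 1)) =
      G (SemidirectProduct.inr (Multiplicative.ofAdd 1))) : F = G := by
  apply SemidirectProduct.hom_ext
  · ext x; exact h x
  · ext; exact h1

lemma mt_rel (ψ : MulAut (FreeGroup α)) (x : FreeGroup α) :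
    (SemidirectProduct.inl (ψ x) :
      FreeGroup α ⋊[zpowersHom (MulAut (FreeGroup α)) ψ] Multiplicative ℤ) =
    SemidirectProduct.inr (Multiplicative.ofAdd 1) * SemidirectProduct.inl x *
      (SemidirectProduct.inr (Multiplicative.ofAdd 1))⁻¹ := by
  have := SemidirectProduct.inl_aut (φ := zpowersHom (MulAut (FreeGroup α)) ψ)
    (Multiplicative.ofAdd 1) x
  simpa [zpowersHom_apply] using this


lemma g_a {s t z u : H} {k : ℕ} (us : t = u * s * u⁻¹)
    (utk : z * s * t * z⁻¹ = u ^ (k + 2) * s * (u ^ (k + 2))⁻¹) :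
    s * t = z⁻¹ * u ^ (k + 1) * t * (z⁻¹ * u ^ (k + 1))⁻¹ := by
  have e0 : s * t = z⁻¹ * (z * s * t * z⁻¹) * z := by group
  rw [e0, utk, us, pow_succ u (k + 1)]
  group

lemma g_b {t z u : H} {k : ℕ} (uz : z * t = u * z * u⁻¹) :
    t * ((u ^ k)⁻¹ * z) = z⁻¹ * u ^ (k + 1) * ((u ^ k)⁻¹ * z) * (z⁻¹ * u ^ (k + 1))⁻¹ := by
  have : t = z⁻¹ * (z * t) := by group
  rw [this, uz, pow_succ' u k]
  group

lemma g_c {s t z u : H} {k : ℕ} (us : t = u * s * u⁻¹) :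
    ((u ^ k)⁻¹ * z)⁻¹ * t * ((u ^ k)⁻¹ * z) =
      z⁻¹ * u ^ (k + 1) * s * (z⁻¹ * u ^ (k + 1))⁻¹ := by
  rw [us, pow_succ u k]
  group

lemma g_conj {b r x y : H} (h : y = r * x * r⁻¹) :
    b * r * x * (b * r)⁻¹ = b * y * b⁻¹ := by
  rw [h]; group

lemma g_step (u s : H) (j : ℕ) : u * (u ^ j * s * (u ^ j)⁻¹) * u⁻¹ =
    u ^ (j + 1) * s * (u ^ (j + 1))⁻¹ := by
  rw [pow_succ' u j]
  group

lemma g_z {v b a : H} {k : ℕ} (ub : v * b * v⁻¹ = b * a) :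
    v ^ k * b * a = v * (v ^ k * b) * v⁻¹ := by
  rw [mul_assoc, ← ub]
  have : v * (v ^ k * b) * v⁻¹ = (v * v ^ k) * b * v⁻¹ := by group
  rw [this, ← pow_succ', pow_succ]
  group

lemma g_k {v a b c : H} {k : ℕ} (ux : v * c * v⁻¹ = a) (ua : v * a * v⁻¹ = b * c * a * b⁻¹) :
    v ^ k * b * c * a * (v ^ k * b)⁻¹ = v * (v ^ (k + 1) * c * (v ^ (k + 1))⁻¹) * v⁻¹ := by
  have e : v ^ k * b * c * a * (v ^ k * b)⁻¹ = v ^ k * (b * c * a * b⁻¹) * (v ^ k)⁻¹ := by group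
  rw [e, ← ua, ← ux, g_step, pow_succ v (k + 1), pow_succ v k]
  group

lemma g_u (u z : H) (k : ℕ) : (u ^ k)⁻¹ * z * (z⁻¹ * u ^ (k + 1)) = u := by
  rw [pow_succ]; group

lemma g_r (b r : H) (k : ℕ) : ((b * r) ^ k * b)⁻¹ * (b * r) ^ (k + 1) = r := by
  rw [pow_succ]; group

end Helper


/-- Each `φ_k` (k ≥ 1) is a monodromy of a splitting of `G = F₃ ⋊_φ ℤ`:
the mapping torus groups `F_{k+3} ⋊_{φ_k} ℤ` are all isomorphic to `F₃ ⋊_φ ℤ`.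
Here `φ : a ↦ ca, b ↦ ab, c ↦ b⁻¹ab` on `FreeGroup (Fin 3)` (`a = of 0`,
`b = of 1`, `c = of 2`), and `φ_k` is defined on the free group on
`Fin 2 ⊕ Fin (k+1)` (`s₁ = of (inl 0)`, `s₂ = of (inl 1)`,
`t_{j+1} = of (inr j)`) by `s₁ ↦ t₁`, `s₂ ↦ s₂t₁`, `t_i ↦ t_{i+1}` for
`1 ≤ i ≤ k`, `t_{k+1} ↦ s₂s₁t₁s₂⁻¹`. -/
theorem stmt7 (k : ℕ) (hk : 1 ≤ k)
    (φ : FreeGroup (Fin 3) ≃* FreeGroup (Fin 3))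
    (ha : φ (FreeGroup.of 0) = FreeGroup.of 2 * FreeGroup.of 0)
    (hb : φ (FreeGroup.of 1) = FreeGroup.of 0 * FreeGroup.of 1)
    (hc : φ (FreeGroup.of 2) = (FreeGroup.of 1)⁻¹ * FreeGroup.of 0 * FreeGroup.of 1)
    (φk : FreeGroup (Fin 2 ⊕ Fin (k + 1)) ≃* FreeGroup (Fin 2 ⊕ Fin (k + 1)))
    (hs1 : φk (FreeGroup.of (Sum.inl 0)) = FreeGroup.of (Sum.inr 0))
    (hs2 : φk (FreeGroup.of (Sum.inl 1)) =
      FreeGroup.of (Sum.inl 1) * FreeGroup.of (Sum.inr 0))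
    (ht : ∀ j : Fin (k + 1), ∀ h : (j : ℕ) < k,
      φk (FreeGroup.of (Sum.inr j)) =
        FreeGroup.of (Sum.inr (⟨(j : ℕ) + 1, by omega⟩ : Fin (k + 1))))
    (htk : φk (FreeGroup.of (Sum.inr (⟨k, by omega⟩ : Fin (k + 1)))) =
      FreeGroup.of (Sum.inl 1) * FreeGroup.of (Sum.inl 0) *
        FreeGroup.of (Sum.inr 0) * (FreeGroup.of (Sum.inl 1))⁻¹) :
    Nonempty
      ((FreeGroup (Fin 2 ⊕ Fin (k + 1))
          ⋊[zpowersHom (MulAut (FreeGroup (Fin 2 ⊕ Fin (k + 1))))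
              (φk : MulAut (FreeGroup (Fin 2 ⊕ Fin (k + 1))))]
          Multiplicative ℤ) ≃*
       (FreeGroup (Fin 3)
          ⋊[zpowersHom (MulAut (FreeGroup (Fin 3))) (φ : MulAut (FreeGroup (Fin 3)))]
          Multiplicative ℤ)) := by
  -- first group
  obtain ⟨a, ea⟩ : ∃ a : (FreeGroup (Fin 3)
          ⋊[zpowersHom (MulAut (FreeGroup (Fin 3))) (φ : MulAut (FreeGroup (Fin 3)))]
          Multiplicative ℤ), a = SemidirectProduct.inl (FreeGroup.of 0) := ⟨_, rfl⟩
  obtain ⟨b, eb⟩ : ∃ a : (FreeGroup (Fin 3)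
          ⋊[zpowersHom (MulAut (FreeGroup (Fin 3))) (φ : MulAut (FreeGroup (Fin 3)))]
          Multiplicative ℤ), a = SemidirectProduct.inl (FreeGroup.of 1) := ⟨_, rfl⟩
  obtain ⟨c, ec⟩ : ∃ a : (FreeGroup (Fin 3)
          ⋊[zpowersHom (MulAut (FreeGroup (Fin 3))) (φ : MulAut (FreeGroup (Fin 3)))]
          Multiplicative ℤ), a = SemidirectProduct.inl (FreeGroup.of 2) := ⟨_, rfl⟩
  obtain ⟨r, er⟩ : ∃ a : (FreeGroup (Fin 3)
          ⋊[zpowersHom (MulAut (FreeGroup (Fin 3))) (φ : MulAut (FreeGroup (Fin 3)))]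
          Multiplicative ℤ), a = SemidirectProduct.inr (Multiplicative.ofAdd 1) := ⟨_, rfl⟩
  have ra : c * a = r * a * r⁻¹ := by
    have := mt_rel φ (FreeGroup.of 0)
    rw [ha] at this
    simpa only [ea, ec, er, map_mul] using this
  have rb : a * b = r * b * r⁻¹ := by
    have := mt_rel φ (FreeGroup.of 1)
    rw [hb] at this
    simpa only [ea, eb, er, map_mul] using this
  have rc : b⁻¹ * a * b = r * c * r⁻¹ := by
    have := mt_rel φ (FreeGroup.of 2)
    rw [hc] at this
    simpa only [ea, eb, ec, er, map_mul, map_inv] using this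
  -- second group
  obtain ⟨s, es⟩ : ∃ a : (FreeGroup (Fin 2 ⊕ Fin (k + 1))
          ⋊[zpowersHom (MulAut (FreeGroup (Fin 2 ⊕ Fin (k + 1))))
              (φk : MulAut (FreeGroup (Fin 2 ⊕ Fin (k + 1))))]
          Multiplicative ℤ), a = SemidirectProduct.inl (FreeGroup.of (Sum.inl 0)) := ⟨_, rfl⟩
  obtain ⟨z, ez⟩ : ∃ a : (FreeGroup (Fin 2 ⊕ Fin (k + 1))
          ⋊[zpowersHom (MulAut (FreeGroup (Fin 2 ⊕ Fin (k + 1))))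
              (φk : MulAut (FreeGroup (Fin 2 ⊕ Fin (k + 1))))]
          Multiplicative ℤ), a = SemidirectProduct.inl (FreeGroup.of (Sum.inl 1)) := ⟨_, rfl⟩
  obtain ⟨t, et⟩ : ∃ t : Fin (k + 1) → (FreeGroup (Fin 2 ⊕ Fin (k + 1))
          ⋊[zpowersHom (MulAut (FreeGroup (Fin 2 ⊕ Fin (k + 1))))
              (φk : MulAut (FreeGroup (Fin 2 ⊕ Fin (k + 1))))]
          Multiplicative ℤ),
    ∀ j, t j = SemidirectProduct.inl (FreeGroup.of (Sum.inr j)) := ⟨_, fun _ => rfl⟩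
  obtain ⟨u, eu⟩ : ∃ a : (FreeGroup (Fin 2 ⊕ Fin (k + 1))
          ⋊[zpowersHom (MulAut (FreeGroup (Fin 2 ⊕ Fin (k + 1))))
              (φk : MulAut (FreeGroup (Fin 2 ⊕ Fin (k + 1))))]
          Multiplicative ℤ), a = SemidirectProduct.inr (Multiplicative.ofAdd 1) := ⟨_, rfl⟩
  have us : t 0 = u * s * u⁻¹ := by
    have := mt_rel φk (FreeGroup.of (Sum.inl 0))
    rw [hs1] at this
    simpa only [es, et, eu, map_mul] using this
  have uz : z * t 0 = u * z * u⁻¹ := by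
    have := mt_rel φk (FreeGroup.of (Sum.inl 1))
    rw [hs2] at this
    simpa only [ez, et, eu, map_mul] using this
  have ut : ∀ (j : ℕ) (hj : j < k + 1), t ⟨j, hj⟩ = u ^ (j + 1) * s * (u ^ (j + 1))⁻¹ := by
    intro j
    induction j with
    | zero => intro hj; simpa using us
    | succ j ih =>
      intro hj
      have := mt_rel φk (FreeGroup.of (Sum.inr ⟨j, by omega⟩))
      rw [ht ⟨j, by omega⟩ (by simpa using hj), ← et, ← et, ← eu, ih] at this
      exact this.trans (g_step u s (j + 1))
  have utk : z * s * t 0 * z⁻¹ = u ^ (k + 2) * s * (u ^ (k + 2))⁻¹ := by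
    have := mt_rel φk (FreeGroup.of (Sum.inr ⟨k, by omega⟩))
    rw [htk, ← et, ← eu, ut] at this
    simp only [map_mul, map_inv, ← es, ← ez, ← et] at this
    exact this.trans (g_step u s (k + 1))
  obtain ⟨P, P1, P2⟩ := mt_lift φ (![t 0, (u ^ k)⁻¹ * z, s] : Fin 3 → (FreeGroup (Fin 2 ⊕ Fin (k + 1))
          ⋊[zpowersHom (MulAut (FreeGroup (Fin 2 ⊕ Fin (k + 1))))
              (φk : MulAut (FreeGroup (Fin 2 ⊕ Fin (k + 1))))]
          Multiplicative ℤ)) (z⁻¹ * u ^ (k + 1)) (by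
    intro x
    fin_cases x
    · simpa [ha, -mul_inv_rev] using g_a us utk
    · simpa [hb, -mul_inv_rev] using g_b uz
    · simpa [hc, -mul_inv_rev] using g_c us)
  have ux : b * r * c * (b * r)⁻¹ = a := by
    rw [g_conj rc, ← mul_assoc, mul_inv_cancel_right, mul_inv_cancel_left]
  have ub : b * r * b * (b * r)⁻¹ = b * a := by
    rw [g_conj rb, ← mul_assoc, mul_inv_cancel_right]
  have ua : b * r * a * (b * r)⁻¹ = b * c * a * b⁻¹ := by
    rw [g_conj ra, ← mul_assoc]
  have gr := g_r b r k
  obtain ⟨v, ev⟩ : ∃ v, v = b * r := ⟨_, rfl⟩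
  rw [← ev] at ux ub ua gr
  obtain ⟨Q, Q1, Q2⟩ := mt_lift φk (Sum.elim ![c, v ^ k * b]
      (fun j : Fin (k + 1) => v ^ ((j : ℕ) + 1) * c * (v ^ ((j : ℕ) + 1))⁻¹) :
      Fin 2 ⊕ Fin (k + 1) → (FreeGroup (Fin 3)
          ⋊[zpowersHom (MulAut (FreeGroup (Fin 3))) (φ : MulAut (FreeGroup (Fin 3)))]
          Multiplicative ℤ)) v (by
    rintro (x | j)
    · fin_cases x
      · simp [hs1]
      · have := g_z (k := k) ub
        simp [hs2, ux, this]
    · by_cases hj : (j : ℕ) < k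
      · simp only [ht j hj, FreeGroup.lift_apply_of, Sum.elim_inr]
        exact (g_step v c (j + 1)).symm
      · obtain rfl : j = ⟨k, k.lt_succ_self⟩ := by ext; simp; omega
        have := g_k (k := k) ux ua
        simp only [htk, map_mul, map_inv, FreeGroup.lift_apply_of, Sum.elim_inr, Sum.elim_inl]
        simpa [ux, -mul_inv_rev] using this)
  have Pa : P a = t 0 := by rw [ea]; exact P1 0
  have Pb : P b = (u ^ k)⁻¹ * z := by rw [eb]; exact P1 1
  have Pc : P c = s := by rw [ec]; exact P1 2
  have Pr : P r = z⁻¹ * u ^ (k + 1) := by rw [er]; exact P2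
  have Pv : P v = u := by rw [ev, map_mul, Pb, Pr, g_u]
  have Qs : Q s = c := by rw [es]; exact Q1 _
  have Qz : Q z = v ^ k * b := by rw [ez]; exact Q1 _
  have Qt : Q (t 0) = a := by rw [et, ← ux]; simpa using Q1 (Sum.inr 0)
  have Qu : Q u = v := by rw [eu]; exact Q2
  refine ⟨MonoidHom.toMulEquiv Q P ?_ ?_⟩
  · apply mt_ext
    · rintro (x | j)
      · fin_cases x
        · change P (Q _) = _
          refine (congrArg (fun w => P (Q w)) es.symm).trans ?_
          refine Eq.trans ?_ es
          change P (Q s) = s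
          rw [Qs, Pc]
        · refine (congrArg (fun w => P (Q w)) ez.symm).trans ?_
          refine Eq.trans ?_ ez
          change P (Q z) = z
          rw [Qz, map_mul, map_pow, Pv, Pb, mul_inv_cancel_left]
      · refine Eq.trans ?_ (et j)
        refine Eq.trans ?_ (ut j j.2).symm
        change P (Q _) = _
        rw [Q1]
        simp only [Sum.elim_inr, map_mul, map_inv, map_pow, Pv, Pc]
    · refine (congrArg (fun w => P (Q w)) eu.symm).trans ?_
      refine Eq.trans ?_ eu
      change P (Q u) = u
      rw [Qu, Pv]
  · apply mt_ext
    · intro x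
      fin_cases x
      · refine (congrArg (fun w => Q (P w)) ea.symm).trans ?_
        refine Eq.trans ?_ ea
        change Q (P a) = a
        rw [Pa, Qt]
      · refine (congrArg (fun w => Q (P w)) eb.symm).trans ?_
        refine Eq.trans ?_ eb
        change Q (P b) = b
        rw [Pb, map_mul, map_inv, map_pow, Qu, Qz, inv_mul_cancel_left]
      · refine (congrArg (fun w => Q (P w)) ec.symm).trans ?_
        refine Eq.trans ?_ ec
        change Q (P c) = c
        rw [Pc, Qs]
    · refine (congrArg (fun w => Q (P w)) er.symm).trans ?_
      refine Eq.trans ?_ er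
      change Q (P r) = r
      rw [Pr, map_mul, map_inv, map_pow, Qu, Qz, gr]
end
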